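/- Let n ≥ 1, let ω = exp(2πi/2^n), let U be the 2^n × 2^n matrix with entries U_{y,z} = ω^{yz}/√(2^n), let Z₁ be the diagonal matrix with (Z₁)_{y,y} = (−1)^{⌊y/2^{n−1}⌋}, and let Z_n be the diagonal matrix with (Z_n)_{y,y} = (−1)^{y mod 2}. Then the operator O = U† Z₁ U anticommutes with Z_n: Z_n · O · Z_n = −O. (Equivalently, the spread operator U† Z₁ U acts nontrivially on the n-th qubit only through the off-diagonal Pauli operators X_n and Y_n, so it has all of its weight on operators supported at the site of qubit n.) -/

import Mathlib

/-!
Let `X` be the permutation matrix of the half-period shift `y ↦ y + 2^(n-1) mod 2^n`, which flips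
the most significant bit. Since `ω^(2^(n-1)) = -1`, shifting the row index of the Fourier
matrix `U` by half a period multiplies column `z` by `(-1)^z`, i.e. `X U = U Zₙ`
(`QFT_mul_PauliZn`). Since the shift flips the leading bit, `X† Z₁ X = -Z₁`
(`PauliZ1_halfShift`). Hence `Zₙ U† Z₁ U Zₙ = U† X† Z₁ X U = -U† Z₁ U`.
Conjugation by `X` is expressed by reindexing with `Matrix.submatrix`.
-/

open Complex Matrix

/-- The quantum Fourier transform matrix on `n` qubits: entries `ω^(y z)/√(2^n)`
with `ω = exp(2πi/2^n)`. -/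
noncomputable def QFT (n : ℕ) : Matrix (Fin (2 ^ n)) (Fin (2 ^ n)) ℂ :=
  fun y z => Complex.exp (2 * Real.pi * Complex.I / 2 ^ n) ^ (y.val * z.val) /
    Real.sqrt (2 ^ n)

/-- The Pauli-Z operator on the first (most significant) qubit: the diagonal matrix
with entries `(−1)^(y₁)`, where `y₁ = ⌊y/2^(n−1)⌋` is the most significant bit. -/
noncomputable def PauliZ1 (n : ℕ) : Matrix (Fin (2 ^ n)) (Fin (2 ^ n)) ℂ :=
  Matrix.diagonal (fun y => (-1 : ℂ) ^ (y.val / 2 ^ (n - 1)))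

/-- The Pauli-Z operator on the `n`-th (least significant) qubit: the diagonal
matrix with entries `(−1)^(yₙ)`, where `yₙ = y mod 2` is the least significant bit. -/
noncomputable def PauliZn (n : ℕ) : Matrix (Fin (2 ^ n)) (Fin (2 ^ n)) ℂ :=
  Matrix.diagonal (fun y => (-1 : ℂ) ^ (y.val % 2))

/-- The shift `y ↦ y + 2^m` modulo `2^(m+1)`, which flips the most significant of `m + 1` bits. -/
def halfShift (m : ℕ) : Equiv.Perm (Fin (2 ^ (m + 1))) :=
  Equiv.addRight ⟨2 ^ m, Nat.pow_lt_pow_right one_lt_two m.lt_succ_self⟩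

lemma halfShift_val (m : ℕ) (y : Fin (2 ^ (m + 1))) :
    (halfShift m y).val = (y.val + 2 ^ m) % 2 ^ (m + 1) := by
  simp [halfShift, Fin.val_add]

lemma root_pow_half (m : ℕ) :
    Complex.exp (2 * Real.pi * Complex.I / 2 ^ (m + 1)) ^ (2 ^ m) = -1 := by
  rw [← Complex.exp_nat_mul, ← Complex.exp_pi_mul_I]
  congr 1
  push_cast
  field_simp
  ring

lemma root_pow_full (m : ℕ) :
    Complex.exp (2 * Real.pi * Complex.I / 2 ^ (m + 1)) ^ (2 ^ (m + 1)) = 1 := by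
  rw [show (2 : ℕ) ^ (m + 1) = 2 ^ m * 2 from pow_succ 2 m, pow_mul, root_pow_half]
  norm_num

/-- Multiplying the columns of the Fourier matrix by `(-1)^z` shifts its rows by half a period. -/
lemma QFT_mul_PauliZn (m : ℕ) :
    QFT (m + 1) * PauliZn (m + 1) = (QFT (m + 1)).submatrix (halfShift m) id := by
  ext y z
  rw [PauliZn, Matrix.mul_diagonal, Matrix.submatrix_apply, id, QFT, QFT, halfShift_val,
    pow_mul _ (_ % _), ← pow_eq_pow_mod _ (root_pow_full m), ← pow_mul, add_mul,
    pow_add _ (_ * _) (_ * _),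
    pow_mul _ (2 ^ m), root_pow_half, ← neg_one_pow_eq_pow_mod_two]
  ring

/-- The half-period shift flips the leading bit, so conjugating by it negates `Z₁`. -/
lemma PauliZ1_halfShift (m : ℕ) :
    (PauliZ1 (m + 1)).submatrix (halfShift m) (halfShift m) = -PauliZ1 (m + 1) := by
  rw [PauliZ1, Matrix.submatrix_diagonal_equiv, Matrix.diagonal_neg]
  congr 1
  ext y
  have hy := y.isLt
  have hp : 0 < 2 ^ m := by positivity
  have hs : 2 ^ (m + 1) = 2 ^ m * 2 := pow_succ 2 m
  simp only [Function.comp_apply, halfShift_val, Nat.add_sub_cancel]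
  rcases lt_or_ge y.val (2 ^ m) with h | h
  · rw [Nat.mod_eq_of_lt (by omega), Nat.add_div_right _ hp,
      Nat.div_eq_of_lt h]
    norm_num
  · have h1 : (y.val + 2 ^ m) % 2 ^ (m + 1) = y.val - 2 ^ m := by
      rw [Nat.mod_eq_sub_mod (by omega), Nat.mod_eq_of_lt (by omega)]
      omega
    have h2 : y.val / 2 ^ m = 1 := by
      rw [Nat.div_eq_iff hp]
      omega
    rw [h1, h2, Nat.div_eq_of_lt (by omega)]
    norm_num

lemma PauliZn_conjTranspose (n : ℕ) : (PauliZn n)ᴴ = PauliZn n := by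
  rw [PauliZn, Matrix.diagonal_conjTranspose]
  congr 1
  ext y
  simp

theorem qft_spread_anticommutes_with_Zn (n : ℕ) (hn : 1 ≤ n) :
    PauliZn n * ((QFT n)ᴴ * PauliZ1 n * QFT n) * PauliZn n =
      -((QFT n)ᴴ * PauliZ1 n * QFT n) := by
  obtain ⟨m, rfl⟩ : ∃ m, n = m + 1 := ⟨n - 1, by omega⟩
  have hU := QFT_mul_PauliZn m
  have hU' : PauliZn (m + 1) * (QFT (m + 1))ᴴ = (QFT (m + 1))ᴴ.submatrix id (halfShift m) := by
    rw [← Matrix.conjTranspose_submatrix, ← hU, Matrix.conjTranspose_mul, PauliZn_conjTranspose]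
  have hZ : PauliZ1 (m + 1) = -(PauliZ1 (m + 1)).submatrix (halfShift m) (halfShift m) := by
    rw [PauliZ1_halfShift, neg_neg]
  calc PauliZn (m + 1) * ((QFT (m + 1))ᴴ * PauliZ1 (m + 1) * QFT (m + 1)) * PauliZn (m + 1)
      = (PauliZn (m + 1) * (QFT (m + 1))ᴴ) * PauliZ1 (m + 1)
          * (QFT (m + 1) * PauliZn (m + 1)) := by
        simp only [Matrix.mul_assoc]
    _ = -((QFT (m + 1))ᴴ * PauliZ1 (m + 1) * QFT (m + 1)) := by
        rw [hU, hU']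
        conv_lhs => rw [hZ]
        rw [Matrix.mul_neg, Matrix.neg_mul, Matrix.submatrix_mul_equiv,
          Matrix.submatrix_mul_equiv, Matrix.submatrix_id_id]
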